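/- Let K be a field, V a finite-dimensional K-vector space, n ≥ 1, and g : V →ₗ[K] V a linear endomorphism. Let T be the linear endomorphism of the n-th tensor power ⨂[K]^n V determined on pure tensors by T (v₀ ⊗ v₁ ⊗ ⋯ ⊗ v_{n-1}) = (g v_{n-1}) ⊗ v₀ ⊗ v₁ ⊗ ⋯ ⊗ v_{n-2} (apply g in the last slot and cyclically shift the slots by one; this is the action of the element (ς_n; 1, …, 1, g) of the wreath product S_n ≀ GL(V) on V^{⊗n}, where ς_n is the n-cycle). Then LinearMap.trace K _ T = LinearMap.trace K V g. -/

import Mathlib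

/-!
In a basis of `V`, the cyclic shift composed with `f₀ ⊗ ⋯ ⊗ fₙ` has diagonal entry
`(f₀) p₁ p₀ * (f₁) p₂ p₁ * ⋯ * (fₙ) p₀ pₙ` at the multi-index `p`. Summing over all closed paths
`p₀, p₁, …, pₙ, p₀` of basis indices gives the trace of the product `fₙ ⋯ f₁ f₀`, which is `g` when
`fₙ = g` and the other factors are the identity.
-/

open scoped TensorProduct

section MatrixTrace

variable {κ R : Type*} [Fintype κ] [DecidableEq κ] [CommSemiring R]

theorem sum_prod_path_mul_eq_trace_mul_prod {n : ℕ} (A : Fin n → Matrix κ κ R)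
    (B : Matrix κ κ R) :
    ∑ p : Fin (n + 1) → κ, (∏ i, A i (p i.succ) (p i.castSucc)) * B (p 0) (p (Fin.last n)) =
      (B * (List.ofFn A).reverse.prod).trace := by
  induction n generalizing B with
  | zero => simp [← (Equiv.funUnique (Fin 1) κ).symm.sum_comp, Matrix.trace]
  | succ n ih =>
    -- Summing out the initial vertex of the path absorbs the first factor `A 0` into `B`.
    calc
      _ = ∑ q : Fin (n + 1) → κ, (∏ i : Fin n, A i.succ (q i.succ) (q i.castSucc)) *
            (A 0 * B) (q 0) (q (Fin.last n)) := by
        rw [← (Fin.consEquiv fun _ ↦ κ).sum_comp, Fintype.sum_prod_type_right]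
        refine Finset.sum_congr rfl fun q _ ↦ ?_
        rw [Matrix.mul_apply, Finset.mul_sum]
        refine Finset.sum_congr rfl fun x _ ↦ ?_
        simp only [Fin.consEquiv_apply, Fin.prod_univ_succ, Fin.cons_succ, Fin.castSucc_zero,
          Fin.cons_zero, ← Fin.succ_castSucc, ← Fin.succ_last]
        ring
      _ = (A 0 * B * (List.ofFn fun i : Fin n ↦ A i.succ).reverse.prod).trace := ih _ _
      _ = (B * (List.ofFn A).reverse.prod).trace := by
        rw [Matrix.mul_assoc, Matrix.trace_mul_comm, List.ofFn_succ, List.reverse_cons,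
          List.prod_append, List.prod_singleton, Matrix.mul_assoc]

end MatrixTrace

section TensorMatrix

variable {ι R : Type*} [CommSemiring R]

theorem toMatrix_piTensorProduct_map [Fintype ι] [DecidableEq ι] {κ κ' M N : ι → Type*}
    [∀ i, Fintype (κ i)] [∀ i, DecidableEq (κ i)] [∀ i, Finite (κ' i)]
    [∀ i, AddCommMonoid (M i)] [∀ i, Module R (M i)]
    [∀ i, AddCommMonoid (N i)] [∀ i, Module R (N i)]
    (b : ∀ i, Module.Basis (κ i) R (M i)) (c : ∀ i, Module.Basis (κ' i) R (N i))
    (f : ∀ i, M i →ₗ[R] N i) (p : ∀ i, κ' i) (q : ∀ i, κ i) :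
    LinearMap.toMatrix (Basis.piTensorProduct b) (Basis.piTensorProduct c)
        (PiTensorProduct.map f) p q =
      ∏ i, LinearMap.toMatrix (b i) (c i) (f i) (p i) (q i) := by
  simp [LinearMap.toMatrix_apply]

theorem piTensorProduct_repr_reindex {ι' : Type*} [Finite ι] [Finite ι'] {κ M : ι → Type*}
    [∀ i, AddCommMonoid (M i)] [∀ i, Module R (M i)] (b : ∀ i, Module.Basis (κ i) R (M i))
    (e : ι ≃ ι') (x : ⨂[R] i, M i) (p : ∀ i, κ i) :
    (Basis.piTensorProduct fun j ↦ b (e.symm j)).repr (PiTensorProduct.reindex R M e x)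
        (fun j ↦ p (e.symm j)) =
      (Basis.piTensorProduct b).repr x p := by
  have := Fintype.ofFinite ι
  have := Fintype.ofFinite ι'
  induction x using PiTensorProduct.induction_on with
  | smul_tprod r v =>
    simp [e.symm.prod_comp fun i ↦ (b i).repr (v i) (p i)]
  | add x y hx hy => simp [hx, hy]

variable {V κ : Type*} [AddCommMonoid V] [Module R V]

theorem trace_reindex_comp_map [Fintype ι] [DecidableEq ι] [Fintype κ] [DecidableEq κ]
    (b : Module.Basis κ R V) (σ : Equiv.Perm ι) (f : ι → Module.End R V) :
    LinearMap.trace R (⨂[R] _ : ι, V)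
        ((PiTensorProduct.reindex R (fun _ ↦ V) σ).toLinearMap ∘ₗ PiTensorProduct.map f) =
      ∑ p : ι → κ, ∏ i, LinearMap.toMatrix b b (f i) (p (σ i)) (p i) := by
  rw [LinearMap.trace_eq_matrix_trace R (Basis.piTensorProduct fun _ ↦ b), Matrix.trace]
  refine Finset.sum_congr rfl fun p _ ↦ ?_
  have hrepr := piTensorProduct_repr_reindex (fun _ : ι ↦ b) σ
    (PiTensorProduct.map f (Basis.piTensorProduct (fun _ ↦ b) p)) (fun i ↦ p (σ i))
  simp only [Equiv.apply_symm_apply] at hrepr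
  rw [Matrix.diag_apply, LinearMap.toMatrix_apply, LinearMap.comp_apply, LinearEquiv.coe_coe,
    hrepr, ← LinearMap.toMatrix_apply, toMatrix_piTensorProduct_map]

end TensorMatrix

section CyclicShift

variable {R V : Type*} [CommSemiring R] [AddCommMonoid V] [Module R V]

theorem trace_reindex_finRotate_comp_map [Module.Free R V] [Module.Finite R V] {n : ℕ}
    (f : Fin (n + 1) → Module.End R V) :
    LinearMap.trace R (⨂[R] _ : Fin (n + 1), V)
        ((PiTensorProduct.reindex R (fun _ ↦ V) (finRotate (n + 1))).toLinearMap ∘ₗ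
          PiTensorProduct.map f) =
      LinearMap.trace R V (List.ofFn f).reverse.prod := by
  classical
  let b := Module.Free.chooseBasis R V
  let A i := LinearMap.toMatrixAlgEquiv b (f i)
  calc
    _ = ∑ p : Fin (n + 1) → Module.Free.ChooseBasisIndex R V,
          (∏ i : Fin n, A i.castSucc (p i.succ) (p i.castSucc)) *
            A (Fin.last n) (p 0) (p (Fin.last n)) := by
      have hrot (i : Fin n) : finRotate (n + 1) i.castSucc = i.succ := finRotate_of_lt i.isLt
      simp only [trace_reindex_comp_map b, Fin.prod_univ_castSucc, hrot, finRotate_last]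
      rfl
    _ = (A (Fin.last n) * (List.ofFn fun i : Fin n ↦ A i.castSucc).reverse.prod).trace :=
      sum_prod_path_mul_eq_trace_mul_prod _ _
    _ = (LinearMap.toMatrixAlgEquiv b (List.ofFn f).reverse.prod).trace := by
      rw [map_list_prod, List.map_reverse, List.map_ofFn, List.ofFn_succ_last, List.reverse_append]
      simp [A]
    _ = LinearMap.trace R V (List.ofFn f).reverse.prod :=
      (LinearMap.trace_eq_matrix_trace R b _).symm

theorem trace_cyclic_shift_last_slot_general [Module.Free R V] [Module.Finite R V] (n : ℕ)
    (g : V →ₗ[R] V) :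
    LinearMap.trace R (⨂[R] _ : Fin (n + 1), V)
        ((PiTensorProduct.reindex R (fun _ : Fin (n + 1) => V)
            (finRotate (n + 1))).toLinearMap ∘ₗ
          PiTensorProduct.map
            (Function.update (fun _ : Fin (n + 1) => (LinearMap.id : V →ₗ[R] V))
              (Fin.last n) g)) =
      LinearMap.trace R V g := by
  rw [trace_reindex_finRotate_comp_map, List.ofFn_succ_last]
  simp [Fin.castSucc_ne_last, ← Module.End.one_eq_id, List.ofFn_const]

end CyclicShift

/-- Let `g` be an endomorphism of a finite-dimensional vector space `V` and let `T` be
the endomorphism of the `(n+1)`-st tensor power of `V` given by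
`T (v₀ ⊗ ⋯ ⊗ vₙ) = (g vₙ) ⊗ v₀ ⊗ ⋯ ⊗ v_{n-1}` (apply `g` in the last slot and then
cyclically shift the slots by one; the action of the wreath-product element
`(ςₙ; 1, …, 1, g)` on the tensor power).  Then the trace of `T` equals the trace
of `g`. -/
theorem trace_cyclic_shift_last_slot (K : Type*) [Field K] (V : Type*)
    [AddCommGroup V] [Module K V] [FiniteDimensional K V] (n : ℕ) (g : V →ₗ[K] V) :
    LinearMap.trace K (⨂[K] _ : Fin (n + 1), V)
        ((PiTensorProduct.reindex K (fun _ : Fin (n + 1) => V)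
            (finRotate (n + 1))).toLinearMap ∘ₗ
          PiTensorProduct.map
            (Function.update (fun _ : Fin (n + 1) => (LinearMap.id : V →ₗ[K] V))
              (Fin.last n) g)) =
      LinearMap.trace K V g :=
  trace_cyclic_shift_last_slot_general n g
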